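/- Let f : ℝ → ℂ, let b ∈ (0,1), and suppose fg and the Stein derivatives below are defined. Then ‖𝒟^b(fg)‖_{L²} ≤ ‖g 𝒟^b f‖_{L²} + ‖f 𝒟^b g‖_{L²} whenever the right-hand side is finite, where 𝒟^b h(x) = (∫ |h(x)-h(y)|²|x-y|^{-1-2b} dy)^{1/2}. -/

import Mathlib

open MeasureTheory

open scoped ENNReal NNReal

/-!
The Stein derivative `𝒟^b` is a norm in `y` only, but `‖φ 𝒟^b f‖_{L²}` is by Tonelli the norm of
`φ(x) (f(x) - f(y))` in `L²` of the measure `|x - y|^{-1-2b} dx dy` on pairs. In that space the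
Leibniz rule is Minkowski's inequality applied to
`f(x) g(x) - f(y) g(y) = (f(x) - f(y)) g(y) + f(x) (g(x) - g(y))`.
The factor `g(y)` of the first term becomes `g(x)` because the measure is invariant under exchanging
`x` and `y`.
-/

section Leibniz

variable {X Y E A : Type*} [MeasurableSpace X] [MeasurableSpace Y] [NormedAddCommGroup E]

-- The first increment is reversed because that term arises by exchanging the two points.
lemma norm_mul_sub_mul_le_add [NonUnitalSeminormedRing A] (a a' c c' : A) :
    ‖a * c - a' * c'‖ ≤ ‖c'‖ * ‖a' - a‖ + ‖a‖ * ‖c - c'‖ :=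
  calc ‖a * c - a' * c'‖ = ‖(a - a') * c' + a * (c - c')‖ := by
        rw [sub_mul, mul_sub, add_comm, sub_add_sub_cancel]
    _ ≤ ‖a - a'‖ * ‖c'‖ + ‖a‖ * ‖c - c'‖ :=
        norm_add_le_of_le (norm_mul_le _ _) (norm_mul_le _ _)
    _ = ‖c'‖ * ‖a' - a‖ + ‖a‖ * ‖c - c'‖ := by rw [norm_sub_rev, mul_comm]

lemma lpNorm_comp_measurePreserving {μ : Measure X} {ν : Measure Y} {p : ℝ≥0∞} {φ : X → Y}
    {h : Y → E} (hh : AEStronglyMeasurable h ν) (hφ : MeasurePreserving φ μ ν) :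
    lpNorm (h ∘ φ) p μ = lpNorm h p ν := by
  rw [← toReal_eLpNorm hh, ← toReal_eLpNorm (hh.comp_measurePreserving hφ),
    eLpNorm_comp_measurePreserving hh hφ]

variable [NonUnitalNormedRing A] {ν : Measure (X × X)} {p : ℝ≥0∞} {f g : X → A}

lemma memLp_mul_sub_mul (hν : MeasurePreserving Prod.swap ν ν)
    (hfg : AEStronglyMeasurable (fun z ↦ f z.1 * g z.1 - f z.2 * g z.2) ν)
    (hf : MemLp (fun z ↦ ‖g z.1‖ * ‖f z.1 - f z.2‖) p ν)
    (hg : MemLp (fun z ↦ ‖f z.1‖ * ‖g z.1 - g z.2‖) p ν) :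
    MemLp (fun z ↦ f z.1 * g z.1 - f z.2 * g z.2) p ν :=
  ((hf.comp_measurePreserving hν).add hg).mono' hfg <| .of_forall fun z ↦
    norm_mul_sub_mul_le_add (f z.1) (f z.2) (g z.1) (g z.2)

lemma lpNorm_mul_sub_mul_le (hν : MeasurePreserving Prod.swap ν ν) (hp : 1 ≤ p)
    (hf : MemLp (fun z ↦ ‖g z.1‖ * ‖f z.1 - f z.2‖) p ν)
    (hg : MemLp (fun z ↦ ‖f z.1‖ * ‖g z.1 - g z.2‖) p ν) :
    lpNorm (fun z ↦ f z.1 * g z.1 - f z.2 * g z.2) p ν ≤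
      lpNorm (fun z ↦ ‖g z.1‖ * ‖f z.1 - f z.2‖) p ν +
        lpNorm (fun z ↦ ‖f z.1‖ * ‖g z.1 - g z.2‖) p ν := by
  have hf' := hf.comp_measurePreserving hν
  rw [← lpNorm_comp_measurePreserving hf.aestronglyMeasurable hν]
  calc lpNorm (fun z ↦ f z.1 * g z.1 - f z.2 * g z.2) p ν
      ≤ lpNorm ((fun z ↦ ‖g z.1‖ * ‖f z.1 - f z.2‖) ∘ Prod.swap +
          fun z : X × X ↦ ‖f z.1‖ * ‖g z.1 - g z.2‖) p ν :=
        lpNorm_mono_real (hf'.add hg) fun z ↦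
          norm_mul_sub_mul_le_add (f z.1) (f z.2) (g z.1) (g z.2)
    _ ≤ _ := lpNorm_add_le hf' hp

end Leibniz

section SteinMeasure

variable {X Y E E' A : Type*} [MeasurableSpace X] [MeasurableSpace Y] [NormedAddCommGroup E]
  [NormedAddCommGroup E'] [NonUnitalNormedRing A]

lemma measurePreserving_withDensity_comp {μ : Measure X} {ν : Measure Y} {φ : X → Y}
    {ρ : Y → ℝ≥0∞} (hφ : MeasurePreserving φ μ ν) (hρ : Measurable ρ) :
    MeasurePreserving φ (μ.withDensity (ρ ∘ φ)) (ν.withDensity ρ) := by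
  refine ⟨hφ.measurable, Measure.ext fun s hs ↦ ?_⟩
  rw [Measure.map_apply hφ.measurable hs, withDensity_apply _ (hφ.measurable hs),
    withDensity_apply _ hs]
  exact hφ.setLIntegral_comp_preimage hs hρ

/-- The measure `w(x, y) dμ(x) dμ(y)` on pairs. Its `L^p` norms are those of generalized Stein
derivatives: the norm of `φ(x) (f(x) - f(y))` in it is the `L^p(μ)` norm of `φ 𝒟f`, where
`𝒟f(x) = (∫ ‖f(x) - f(y)‖^p w(x, y) dμ(y))^{1/p}`. The kernel multiplies, rather
than divides, so the Stein derivative `𝒟^b` on the line has `p = 2` and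
`w(x, y) = |x - y|^{-1-2b}`. -/
noncomputable def steinMeasure (μ : Measure X) (w : X → X → ℝ≥0) : Measure (X × X) :=
  (μ.prod μ).withDensity fun z ↦ w z.1 z.2

variable {μ : Measure X} {w : X → X → ℝ≥0} {p : ℝ≥0} {φ : X → E} {h : X → E'}
  {f g : X → A}

lemma aestronglyMeasurable_steinMeasure {F : X × X → E}
    (hF : AEStronglyMeasurable F (μ.prod μ)) : AEStronglyMeasurable F (steinMeasure μ w) :=
  hF.mono_ac (withDensity_absolutelyContinuous _ _)

lemma norm_mul_norm_rpow_mul (a : E) (c : E') (r s : ℝ) :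
    ‖‖a‖ * ‖c‖‖ ^ r * s = ‖a‖ ^ r * (‖c‖ ^ r * s) := by
  rw [norm_mul, norm_norm, norm_norm, Real.mul_rpow (norm_nonneg _) (norm_nonneg _), mul_assoc]

lemma aestronglyMeasurable_norm_mul_norm_sub (hφ : AEStronglyMeasurable φ μ)
    (hh : AEStronglyMeasurable h μ) :
    AEStronglyMeasurable (fun z ↦ ‖φ z.1‖ * ‖h z.1 - h z.2‖) (μ.prod μ) :=
  hφ.comp_fst.norm.mul (hh.comp_fst.sub hh.comp_snd).norm

lemma memLp_steinMeasure_iff {F : X × X → E} (hw : Measurable w.uncurry) (hp : p ≠ 0)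
    (hF : AEStronglyMeasurable F (μ.prod μ)) :
    MemLp F p (steinMeasure μ w) ↔
      Integrable (fun z ↦ ‖F z‖ ^ (p : ℝ) * w z.1 z.2) (μ.prod μ) := by
  rw [← integrable_norm_rpow_iff (aestronglyMeasurable_steinMeasure hF) (by simpa using hp)
    ENNReal.coe_ne_top, ENNReal.coe_toReal, steinMeasure,
    integrable_withDensity_iff_integrable_smul (f := fun z : X × X ↦ w z.1 z.2) hw]
  simp only [NNReal.smul_def, smul_eq_mul, mul_comm]

variable [SFinite μ]

lemma measurePreserving_swap_steinMeasure (hw : Measurable w.uncurry)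
    (hw_symm : ∀ x y, w x y = w y x) :
    MeasurePreserving Prod.swap (steinMeasure μ w) (steinMeasure μ w) := by
  have h_comp := measurePreserving_withDensity_comp
    (Measure.measurePreserving_swap (μ := μ) (ν := μ)) hw.coe_nnreal_ennreal
  have hρ : (fun z : X × X ↦ (w.uncurry z : ℝ≥0∞)) ∘ Prod.swap = fun z ↦ (w.uncurry z : ℝ≥0∞) :=
    funext fun z ↦ congrArg _ (hw_symm z.2 z.1)
  rwa [hρ] at h_comp

lemma lpNorm_steinMeasure {F : X × X → E} (hw : Measurable w.uncurry) (hp : p ≠ 0)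
    (hF : AEStronglyMeasurable F (μ.prod μ)) (hF_mem : MemLp F p (steinMeasure μ w)) :
    lpNorm F p (steinMeasure μ w) =
      (∫ x, ∫ y, ‖F (x, y)‖ ^ (p : ℝ) * w x y ∂μ ∂μ) ^ (1 / p : ℝ) := by
  rw [← integral_prod _ ((memLp_steinMeasure_iff hw hp hF).1 hF_mem),
    lpNorm_nnreal_eq_integral_norm_rpow hp hF_mem.aestronglyMeasurable, steinMeasure,
    integral_withDensity_eq_integral_smul (f := fun z : X × X ↦ w z.1 z.2) hw, one_div]
  simp only [NNReal.smul_def, smul_eq_mul, mul_comm]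

lemma memLp_steinMeasure_norm_mul_norm_sub (hw : Measurable w.uncurry) (hp : p ≠ 0)
    (hφ : AEStronglyMeasurable φ μ) (hh : AEStronglyMeasurable h μ)
    (hh_int : ∀ᵐ x ∂μ, Integrable (fun y ↦ ‖h x - h y‖ ^ (p : ℝ) * w x y) μ)
    (hφh_int : Integrable (fun x ↦ ‖φ x‖ ^ (p : ℝ) * ∫ y, ‖h x - h y‖ ^ (p : ℝ) * w x y ∂μ) μ) :
    MemLp (fun z ↦ ‖φ z.1‖ * ‖h z.1 - h z.2‖) p (steinMeasure μ w) := by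
  have hF := aestronglyMeasurable_norm_mul_norm_sub hφ hh
  have hF_kernel : AEStronglyMeasurable
      (fun z ↦ ‖‖φ z.1‖ * ‖h z.1 - h z.2‖‖ ^ (p : ℝ) * w z.1 z.2) (μ.prod μ) :=
    (hF.norm.aemeasurable.pow_const _).aestronglyMeasurable.mul
      hw.coe_nnreal_real.aestronglyMeasurable
  rw [memLp_steinMeasure_iff hw hp hF, integrable_prod_iff hF_kernel]
  simp only [norm_mul_norm_rpow_mul]
  refine ⟨hh_int.mono fun x hx ↦ hx.const_mul _, ?_⟩
  have h_nonneg (x y : X) : 0 ≤ ‖φ x‖ ^ (p : ℝ) * (‖h x - h y‖ ^ (p : ℝ) * w x y) := by positivity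
  simpa only [Real.norm_of_nonneg (h_nonneg _ _), integral_const_mul] using hφh_int

lemma lpNorm_steinMeasure_norm_mul_norm_sub (hw : Measurable w.uncurry) (hp : p ≠ 0)
    (hφ : AEStronglyMeasurable φ μ) (hh : AEStronglyMeasurable h μ)
    (hφh : MemLp (fun z ↦ ‖φ z.1‖ * ‖h z.1 - h z.2‖) p (steinMeasure μ w)) :
    lpNorm (fun z ↦ ‖φ z.1‖ * ‖h z.1 - h z.2‖) p (steinMeasure μ w) =
      (∫ x, ‖φ x‖ ^ (p : ℝ) * ∫ y, ‖h x - h y‖ ^ (p : ℝ) * w x y ∂μ ∂μ) ^ (1 / p : ℝ) := by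
  rw [lpNorm_steinMeasure hw hp (aestronglyMeasurable_norm_mul_norm_sub hφ hh) hφh]
  simp only [norm_mul_norm_rpow_mul, integral_const_mul]

theorem stmt15_general (hw : Measurable w.uncurry) (hw_symm : ∀ x y, w x y = w y x) (hp : 1 ≤ p)
    (hf : AEStronglyMeasurable f μ) (hg : AEStronglyMeasurable g μ)
    (hf_int : ∀ᵐ x ∂μ, Integrable (fun y ↦ ‖f x - f y‖ ^ (p : ℝ) * w x y) μ)
    (hg_int : ∀ᵐ x ∂μ, Integrable (fun y ↦ ‖g x - g y‖ ^ (p : ℝ) * w x y) μ)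
    (hgf_int : Integrable (fun x ↦ ‖g x‖ ^ (p : ℝ) * ∫ y, ‖f x - f y‖ ^ (p : ℝ) * w x y ∂μ) μ)
    (hfg_int : Integrable (fun x ↦ ‖f x‖ ^ (p : ℝ) * ∫ y, ‖g x - g y‖ ^ (p : ℝ) * w x y ∂μ) μ) :
    (∫ x, ∫ y, ‖f x * g x - f y * g y‖ ^ (p : ℝ) * w x y ∂μ ∂μ) ^ (1 / p : ℝ) ≤
      (∫ x, ‖g x‖ ^ (p : ℝ) * ∫ y, ‖f x - f y‖ ^ (p : ℝ) * w x y ∂μ ∂μ) ^ (1 / p : ℝ) +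
        (∫ x, ‖f x‖ ^ (p : ℝ) * ∫ y, ‖g x - g y‖ ^ (p : ℝ) * w x y ∂μ ∂μ) ^ (1 / p : ℝ) := by
  have hp₀ : p ≠ 0 := (zero_lt_one.trans_le hp).ne'
  have h_swap := measurePreserving_swap_steinMeasure (μ := μ) hw hw_symm
  have hgf := memLp_steinMeasure_norm_mul_norm_sub hw hp₀ hg hf hf_int hgf_int
  have hfg := memLp_steinMeasure_norm_mul_norm_sub hw hp₀ hf hg hg_int hfg_int
  have h_meas : AEStronglyMeasurable (fun z ↦ f z.1 * g z.1 - f z.2 * g z.2) (μ.prod μ) :=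
    (hf.mul hg).comp_fst.sub (hf.mul hg).comp_snd
  have h_mem := memLp_mul_sub_mul h_swap (aestronglyMeasurable_steinMeasure h_meas) hgf hfg
  rw [← lpNorm_steinMeasure hw hp₀ h_meas h_mem,
    ← lpNorm_steinMeasure_norm_mul_norm_sub hw hp₀ hg hf hgf,
    ← lpNorm_steinMeasure_norm_mul_norm_sub hw hp₀ hf hg hfg]
  exact lpNorm_mul_sub_mul_le h_swap (by exact_mod_cast hp) hgf hfg

end SteinMeasure

/-- Leibniz rule for the Stein derivative `𝒟^b h(x) = (∫ |h(x)-h(y)|²/|x-y|^{1+2b} dy)^{1/2}`,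
`b ∈ (0,1)`: whenever all the Stein derivatives involved are defined and the right-hand side
is finite, `‖𝒟^b(fg)‖_{L²} ≤ ‖g 𝒟^b f‖_{L²} + ‖f 𝒟^b g‖_{L²}`. -/
theorem stmt15 (b : ℝ) (hb : b ∈ Set.Ioo (0:ℝ) 1) (f g : ℝ → ℂ)
    (hfm : Measurable f) (hgm : Measurable g)
    (hf : ∀ x, Integrable (fun y => ‖f x - f y‖ ^ 2 / |x - y| ^ (1 + 2 * b)))
    (hg : ∀ x, Integrable (fun y => ‖g x - g y‖ ^ 2 / |x - y| ^ (1 + 2 * b)))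
    (hfg : ∀ x, Integrable (fun y => ‖f x * g x - f y * g y‖ ^ 2 / |x - y| ^ (1 + 2 * b)))
    (h1 : Integrable (fun x => ‖g x‖ ^ 2 * ∫ y, ‖f x - f y‖ ^ 2 / |x - y| ^ (1 + 2 * b)))
    (h2 : Integrable (fun x => ‖f x‖ ^ 2 * ∫ y, ‖g x - g y‖ ^ 2 / |x - y| ^ (1 + 2 * b))) :
    (∫ x : ℝ, ∫ y : ℝ, ‖f x * g x - f y * g y‖ ^ 2 / |x - y| ^ (1 + 2 * b)) ^ (1/2 : ℝ)
      ≤ (∫ x : ℝ, ‖g x‖ ^ 2 * ∫ y, ‖f x - f y‖ ^ 2 / |x - y| ^ (1 + 2 * b)) ^ (1/2 : ℝ)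
        + (∫ x : ℝ, ‖f x‖ ^ 2 * ∫ y, ‖g x - g y‖ ^ 2 / |x - y| ^ (1 + 2 * b)) ^ (1/2 : ℝ) := by
  have leibniz := stmt15_general (μ := volume) (p := 2)
    (w := fun x y : ℝ ↦ (‖x - y‖₊ ^ (1 + 2 * b))⁻¹) (by fun_prop)
    (fun x y ↦ by rw [← nnnorm_neg, neg_sub]) one_le_two hfm.aestronglyMeasurable
    hgm.aestronglyMeasurable
  simp only [NNReal.coe_inv, NNReal.coe_rpow, coe_nnnorm, Real.norm_eq_abs, NNReal.coe_ofNat,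
    Real.rpow_two, ← div_eq_mul_inv] at leibniz
  exact leibniz (.of_forall hf) (.of_forall hg) h1 h2
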